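/- Let λ be an infinite cardinal. Then 2^λ < 2^{λ⁺} if and only if the weak diamond Φ²_{λ⁺}(λ⁺) holds. -/

import Mathlib

universe u

open Cardinal

namespace WD

/-- `C` is closed and unbounded in the ordinal `Λ`. -/
def ClubIn (C : Set Ordinal.{u}) (Λ : Ordinal.{u}) : Prop :=
  (∀ x ∈ C, x < Λ) ∧
  (∀ α < Λ, ∃ β ∈ C, α ≤ β) ∧
  (∀ S : Set Ordinal.{u}, S ⊆ C → S.Nonempty → BddAbove S → sSup S < Λ → sSup S ∈ C)

/-- `S` is stationary in the ordinal `Λ`: it meets every club of `Λ`. -/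
def StatIn (S : Set Ordinal.{u}) (Λ : Ordinal.{u}) : Prop :=
  ∀ C : Set Ordinal.{u}, ClubIn C Λ → (S ∩ C).Nonempty

/-- The ordinals below `λ⁺`. -/
def Tower (lam : Cardinal.{u}) : Type (u + 1) :=
  {α : Ordinal.{u} // α < (Order.succ lam).ord}

/-- A set of size `2^λ` (realized as the ordinals below `(2^λ).ord`). -/
def Target (lam : Cardinal.{u}) : Type (u + 1) :=
  {β : Ordinal.{u} // β < ((2 : Cardinal.{u}) ^ lam).ord}

/-- The elements of `^{<λ⁺}(2^λ)`: functions from a proper initial segment of `λ⁺`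
into `2^λ`. -/
def PSeq (lam : Cardinal.{u}) : Type (u + 1) :=
  (α : Tower lam) × ({β : Ordinal.{u} // β < α.1} → Target lam)

/-- The restriction `f ↾ α` of `f : λ⁺ → 2^λ` to `α < λ⁺`. -/
def restr (lam : Cardinal.{u}) (f : Tower lam → Target lam) (α : Tower lam) : PSeq lam :=
  ⟨α, fun β => f ⟨β.1, β.2.trans α.2⟩⟩

/-- The weak diamond principle `Φ^k_{λ⁺}(S)` of Devlin–Shelah: for every
`F : ^{<λ⁺}(2^λ) → k` there is `g : λ⁺ → k` such that for every `f : λ⁺ → 2^λ` the set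
`{α ∈ S : F(f ↾ α) = g(α)}` is stationary in `λ⁺`. -/
def WeakDiamond (lam : Cardinal.{u}) (k : ℕ) (S : Set Ordinal.{u}) : Prop :=
  ∀ F : PSeq lam → Fin k, ∃ g : Tower lam → Fin k,
    ∀ f : Tower lam → Target lam,
      StatIn {α : Ordinal.{u} | ∃ hα : α < (Order.succ lam).ord,
          α ∈ S ∧ F (restr lam f ⟨α, hα⟩) = g ⟨α, hα⟩}
        (Order.succ lam).ord

end WD

/-! The failure of the weak diamond says that a single `F : ^{<λ⁺}(2^λ) → 2` *codes* every
`g : λ⁺ → 2`: some `f` satisfies `F (f ↾ a) = g a` for all `a` in a club. If `2^{λ⁺} ≤ 2^λ`, such an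
`F` reads `g` off the first value of `f`. Conversely, running `λ` copies of `F` in parallel codes
colourings by elements of `^{<λ⁺}(2^λ)`. Hence any `f₀` starts a chain `(fₙ, Cₙ)` in which, for
`a ∈ Cₙ₊₁`, the restriction `fₙ₊₁ ↾ a` codes `fₙ ↾ b` with `b` the next element of `Cₙ` after `a`.
The restrictions `fₙ ↾ a` to one common point `a ∈ ⋂ Cₙ` determine every `fₙ ↾ a'` with `a'` the
next point of `⋂ Cₙ`, and so on up to all of `f₀`. This gives `2^{λ⁺} ≤ (2^λ)^ℵ₀ = 2^λ`. -/

namespace WD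

open Set Order

section Club

variable {α : Type*} [LinearOrder α]

theorem dirSupClosed_eqOn_Iio {β : Type*} (f g : α → β) :
    DirSupClosed {a | EqOn f g (Iio a)} := by
  intro d hd _ _ a ha b hb
  obtain ⟨c, hc, hbc⟩ := (lt_isLUB_iff ha).1 hb
  exact hd hc hbc

theorem mem_of_isLUB_range {C : ℕ → Set α} (hC : ∀ n, IsClub (C n)) (hanti : Antitone C)
    {b : ℕ → α} (hb : Monotone b) (hmem : ∀ n, b n ∈ C n) {a : α} (ha : IsLUB (range b) a)
    (n : ℕ) : a ∈ C n := by
  have htail : IsLUB (range fun m => b (n + m)) a := by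
    refine ⟨?_, fun u hu => ha.2 ?_⟩
    · rintro _ ⟨m, rfl⟩
      exact ha.1 ⟨n + m, rfl⟩
    · rintro _ ⟨m, rfl⟩
      exact (hb (Nat.le_add_left m n)).trans (hu ⟨m, rfl⟩)
  refine (hC n).isLUB_mem ?_ (range_nonempty _) htail
  rintro _ ⟨m, rfl⟩
  exact hanti (Nat.le_add_right n m) (hmem _)

variable [WellFoundedLT α]

theorem exists_isLUB_of_bddAbove {s : Set α} (hs : BddAbove s) : ∃ a, IsLUB s a := by
  obtain ⟨a, ha, hmin⟩ := wellFounded_lt.has_min (upperBounds s) hs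
  exact ⟨a, ha, fun b hb => not_lt.1 (hmin b hb)⟩

theorem isCofinal_of_forall_exists_gt {s : Set α} (hs : DirSupClosed s) (hne : s.Nonempty)
    (hgt : ∀ a ∈ s, ∃ b ∈ s, a < b) : IsCofinal s := by
  by_contra hcof
  obtain ⟨a, ha⟩ := exists_isLUB_of_bddAbove (BddAbove.of_not_isCofinal hcof)
  obtain ⟨b, hb, hab⟩ := hgt a (hs subset_rfl hne (.of_linearOrder _) ha)
  exact (ha.1 hb).not_gt hab

theorem exists_isLeast_inter_Ioi [NoMaxOrder α] {s : Set α} (hs : IsCofinal s) (a : α) :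
    ∃ b, IsLeast (s ∩ Ioi a) b := by
  obtain ⟨a', haa'⟩ := exists_gt a
  obtain ⟨c, hc, hac⟩ := hs a'
  obtain ⟨b, hb, hmin⟩ := wellFounded_lt.has_min (s ∩ Ioi a) ⟨c, hc, haa'.trans_le hac⟩
  exact ⟨b, hb, fun x hx => not_lt.1 (hmin x hx)⟩

end Club

/-- The functions from a proper initial segment `{b | b < a}` of `α` to `β`, the general form of
`^{<λ⁺}(2^λ)`. -/
def InitSeq (α β : Type*) [Preorder α] : Type _ :=
  Σ a : α, Iio a → β

namespace InitSeq

/-- The restriction `f ↾ a` of `f` to the points below `a`. -/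
def restrict {α β : Type*} [Preorder α] (f : α → β) (a : α) : InitSeq α β :=
  ⟨a, fun b => f b⟩

theorem restrict_eq_restrict_iff {α β : Type*} [Preorder α] {f g : α → β} {a b : α} :
    restrict f a = restrict g b ↔ a = b ∧ EqOn f g (Iio a) := by
  constructor
  · intro h
    obtain rfl : a = b := congrArg Sigma.fst h
    exact ⟨rfl, fun x hx => congrFun (eq_of_heq (Sigma.mk.inj h).2) ⟨x, hx⟩⟩
  · rintro ⟨rfl, h⟩
    exact congrArg (Sigma.mk a) (funext fun x => h x.2)

end InitSeq

theorem mk_initSeq_le {α β : Type u} [Preorder α] {κ : Cardinal.{u}} (hκ : ℵ₀ ≤ κ)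
    (hα : #α ≤ 2 ^ κ) (hseg : ∀ a : α, #(Iio a) ≤ κ) (hβ : #β ≤ 2 ^ κ) :
    #(InitSeq α β) ≤ 2 ^ κ := by
  have hfun (a : α) : #(Iio a → β) ≤ 2 ^ κ :=
    calc #(Iio a → β) ≤ (2 ^ κ) ^ #(Iio a) := power_le_power_right hβ
      _ = 2 ^ (κ * #(Iio a)) := power_mul.symm
      _ ≤ 2 ^ κ := power_le_power_left two_ne_zero (mul_le_of_le hκ le_rfl (hseg a))
  calc #(InitSeq α β) = sum fun a : α => #(Iio a → β) := mk_sigma _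
    _ ≤ sum fun _ : α => 2 ^ κ := sum_le_sum _ _ hfun
    _ = #α * 2 ^ κ := sum_const' _ _
    _ ≤ 2 ^ κ := mul_le_of_le (hκ.trans (cantor κ).le) hα le_rfl

/-- `F` codes every colouring `g` of `α` modulo a club: some `f` satisfies `F (f ↾ a) = g a` for
club many `a`. For two colours, this says that `F` witnesses the failure of the weak diamond. -/
def CodesColorings {α β X : Type*} [LinearOrder α] (F : InitSeq α β → X) : Prop :=
  ∀ g : α → X, ∃ f : α → β, ∃ C : Set α, IsClub C ∧ ∀ a ∈ C, F (InitSeq.restrict f a) = g a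

theorem codesColorings_iff_not_isStationary {α β : Type*} [LinearOrder α]
    {F : InitSeq α β → Fin 2} :
    CodesColorings F ↔
      ∀ g : α → Fin 2, ∃ f, ¬ IsStationary {a | F (InitSeq.restrict f a) = g a} := by
  have hflip (x y : Fin 2) : x = y ↔ x ≠ y.rev := by decide +revert
  simp only [not_isStationary_iff, disjoint_right, mem_ofPred_eq]
  constructor
  · intro hF g
    obtain ⟨f, C, hC, hfC⟩ := hF fun a => (g a).rev
    exact ⟨f, C, hC, fun a ha heq => (hflip _ _).1 (hfC a ha) (Fin.rev_rev _ ▸ heq)⟩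
  · intro hF g
    obtain ⟨f, C, hC, hfC⟩ := hF fun a => (g a).rev
    exact ⟨f, C, hC, fun a ha => (hflip _ _).2 (hfC ha)⟩

theorem CodesColorings.comp_surjective {α β X Y : Type*} [LinearOrder α] {F : InitSeq α β → X}
    (hF : CodesColorings F) {φ : X → Y} (hφ : φ.Surjective) : CodesColorings (φ ∘ F) := by
  intro g
  obtain ⟨f, C, hC, hfC⟩ := hF (Function.surjInv hφ ∘ g)
  exact ⟨f, C, hC, fun a ha => by simp [hfC a ha, Function.surjInv_eq]⟩

theorem CodesColorings.exists_pi {α ι : Type u} {β X : Type*} [LinearOrder α] [WellFoundedLT α]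
    {F : InitSeq α β → X} (hF : CodesColorings F) (hα : cof α ≠ ℵ₀) (hι : #ι < cof α)
    {decode : β → ι → β} (hdecode : decode.Surjective) :
    ∃ G : InitSeq α β → ι → X, CodesColorings G := by
  refine ⟨fun s i => F ⟨s.1, fun b => decode (s.2 b) i⟩, fun g => ?_⟩
  choose f C hC hfC using fun i => hF fun a => g a i
  refine ⟨fun a => Function.surjInv hdecode fun i => f i a, ⋂ i, C i,
    .iInter hα (by simpa using hι) hC, fun a ha => funext fun i => ?_⟩
  rw [← hfC i a (mem_iInter.1 ha i)]
  simp [InitSeq.restrict, Function.surjInv_eq hdecode]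

theorem exists_codesColorings_of_embedding {α β X : Type*} [LinearOrder α] [OrderBot α]
    [NoMaxOrder α] [Nonempty X] (e : (α → X) ↪ β) :
    ∃ F : InitSeq α β → X, CodesColorings F := by
  classical
  let x₀ : X := Classical.arbitrary X
  have : Nonempty (α → X) := ⟨fun _ => x₀⟩
  refine ⟨fun s => if h : ⊥ < s.1 then Function.invFun e (s.2 ⟨⊥, h⟩) s.1 else x₀,
    fun g => ⟨fun _ => e g, Ioi ⊥, ⟨?_, fun a => ?_⟩, fun a ha => ?_⟩⟩
  · rintro d hd ⟨b, hb⟩ - a ha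
    exact (hd hb).trans_le (ha.1 hb)
  · obtain ⟨b, hb⟩ := exists_gt a
    exact ⟨b, bot_le.trans_lt hb, hb.le⟩
  · have ha' : ⊥ < a := ha
    simp [InitSeq.restrict, ha', Function.leftInverse_invFun e.injective g]

/-- A sequence of functions `f n` and clubs `C n` such that, for `a ∈ C (n + 1)`, the restriction
`f (n + 1) ↾ a` is decoded by `G` to the restriction of `f n` to the next point of `C n`. -/
structure IsCodingChain {α β : Type*} [LinearOrder α] (G : InitSeq α β → InitSeq α β)
    (f : ℕ → α → β) (C : ℕ → Set α) : Prop where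
  isClub : ∀ n, IsClub (C n)
  antitone : Antitone C
  decode : ∀ n, ∀ a ∈ C (n + 1), ∃ b, IsLeast (C n ∩ Ioi a) b ∧
    G (InitSeq.restrict (f (n + 1)) a) = InitSeq.restrict (f n) b

namespace IsCodingChain

section Agreement

variable {α β : Type*} [LinearOrder α] {G : InitSeq α β → InitSeq α β} {f f' : ℕ → α → β}
  {C C' : ℕ → Set α}

theorem exists_eqOn_Iio (h : IsCodingChain G f C) (h' : IsCodingChain G f' C') {n : ℕ} {a : α}
    (ha : a ∈ C (n + 1)) (ha' : a ∈ C' (n + 1)) (heq : EqOn (f (n + 1)) (f' (n + 1)) (Iio a)) :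
    ∃ b, IsLeast (C n ∩ Ioi a) b ∧ IsLeast (C' n ∩ Ioi a) b ∧ EqOn (f n) (f' n) (Iio b) := by
  obtain ⟨b, hb, hGb⟩ := h.decode n a ha
  obtain ⟨b', hb', hGb'⟩ := h'.decode n a ha'
  rw [InitSeq.restrict_eq_restrict_iff.2 ⟨rfl, heq⟩, hGb'] at hGb
  obtain ⟨rfl, hff'⟩ := InitSeq.restrict_eq_restrict_iff.1 hGb
  exact ⟨b', hb, hb', hff'.symm⟩

theorem eqOn_Iio_of_le (h : IsCodingChain G f C) (h' : IsCodingChain G f' C') {m n : ℕ}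
    (hmn : m ≤ n) {a : α} (ha : a ∈ C n) (ha' : a ∈ C' n) (heq : EqOn (f n) (f' n) (Iio a)) :
    EqOn (f m) (f' m) (Iio a) := by
  induction n, hmn using Nat.le_induction with
  | base => exact heq
  | succ n _ ih =>
    obtain ⟨b, hb, -, hbeq⟩ := h.exists_eqOn_Iio h' ha ha' heq
    exact ih (h.antitone n.le_succ ha) (h'.antitone n.le_succ ha')
      (hbeq.mono (Iio_subset_Iio hb.1.2.le))

/-- The points common to all the clubs of two chains below which the chains coincide. -/
def agreement (f f' : ℕ → α → β) (C C' : ℕ → Set α) : Set α :=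
  ⋂ n, C n ∩ C' n ∩ {a | EqOn (f n) (f' n) (Iio a)}

theorem dirSupClosed_agreement (h : IsCodingChain G f C) (h' : IsCodingChain G f' C') :
    DirSupClosed (agreement f f' C C') :=
  .iInter fun n => ((h.isClub n).dirSupClosed.inter (h'.isClub n).dirSupClosed).inter
    (dirSupClosed_eqOn_Iio _ _)

variable [WellFoundedLT α] [NoMaxOrder α]

theorem exists_gt_mem_agreement (hα : cof α ≠ ℵ₀) (h : IsCodingChain G f C)
    (h' : IsCodingChain G f' C') {a : α} (ha : a ∈ agreement f f' C C') :
    ∃ c ∈ agreement f f' C C', a < c := by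
  simp only [agreement, mem_iInter, mem_inter_iff, mem_ofPred_eq] at ha ⊢
  choose b hb hb' heq using fun n =>
    h.exists_eqOn_Iio h' (ha (n + 1)).1.1 (ha (n + 1)).1.2 (ha (n + 1)).2
  have hmono : Monotone b := fun m n hmn =>
    (hb m).2 ⟨h.antitone hmn (hb n).1.1, (hb n).1.2⟩
  have hbdd : BddAbove (range b) := by
    obtain ⟨u, hu, -⟩ := exists_isLeast_inter_Ioi
      (IsClub.iInter_of_countable hα h.isClub).isCofinal a
    refine ⟨u, ?_⟩
    rintro _ ⟨n, rfl⟩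
    exact (hb n).2 ⟨mem_iInter.1 hu.1 n, hu.2⟩
  obtain ⟨c, hc⟩ := exists_isLUB_of_bddAbove hbdd
  refine ⟨c, fun n => ⟨⟨?_, ?_⟩, fun x hx => ?_⟩, (hb 0).1.2.trans_le (hc.1 ⟨0, rfl⟩)⟩
  · exact mem_of_isLUB_range h.isClub h.antitone hmono (fun n => (hb n).1.1) hc n
  · exact mem_of_isLUB_range h'.isClub h'.antitone hmono (fun n => (hb' n).1.1) hc n
  · obtain ⟨_, ⟨m, rfl⟩, hxm⟩ := (lt_isLUB_iff hc).1 hx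
    have hlast := heq (max n m)
    exact h.eqOn_Iio_of_le h' (le_max_left n m) (hb _).1.1 (hb' _).1.1 hlast
      (hxm.trans_le (hmono (le_max_right n m)))

theorem eq_of_mem_agreement (hα : cof α ≠ ℵ₀) (h : IsCodingChain G f C)
    (h' : IsCodingChain G f' C') {a : α} (ha : a ∈ agreement f f' C C') : f = f' := by
  have hcof : IsCofinal (agreement f f' C C') :=
    isCofinal_of_forall_exists_gt (h.dirSupClosed_agreement h') ⟨a, ha⟩
      fun _ => exists_gt_mem_agreement hα h h'
  funext n x
  obtain ⟨b, ⟨hb, hxb⟩, -⟩ := exists_isLeast_inter_Ioi hcof x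
  exact (mem_iInter.1 hb n).2 hxb

end Agreement

end IsCodingChain

section Counting

variable {α β : Type*} [LinearOrder α] [WellFoundedLT α] [NoMaxOrder α]

theorem CodesColorings.exists_code {G : InitSeq α β → InitSeq α β} (hG : CodesColorings G)
    (hα : cof α ≠ ℵ₀) (f : α → β) {C : Set α} (hC : IsClub C) :
    ∃ (f' : α → β) (C' : Set α), IsClub C' ∧ C' ⊆ C ∧
      ∀ a ∈ C', ∃ b, IsLeast (C ∩ Ioi a) b ∧ G (InitSeq.restrict f' a) = InitSeq.restrict f b := by
  choose next hnext using exists_isLeast_inter_Ioi hC.isCofinal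
  obtain ⟨f', D, hD, hf'⟩ := hG fun a => InitSeq.restrict f (next a)
  exact ⟨f', C ∩ D, hC.inter hα hD, inter_subset_left,
    fun a ha => ⟨next a, hnext a, hf' a ha.2⟩⟩

theorem CodesColorings.exists_isCodingChain {G : InitSeq α β → InitSeq α β}
    (hG : CodesColorings G) (hα : cof α ≠ ℵ₀) (f₀ : α → β) :
    ∃ f C, IsCodingChain G f C ∧ f 0 = f₀ := by
  choose code club hclub hsub hdecode using
    fun p : (α → β) × {C : Set α // IsClub C} => hG.exists_code hα p.1 p.2.2
  let chain (n : ℕ) := (fun p => (code p, ⟨club p, hclub p⟩))^[n] (f₀, ⟨univ, .univ⟩)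
  have hsucc (n : ℕ) : chain (n + 1) = (code (chain n), ⟨club (chain n), hclub _⟩) :=
    Function.iterate_succ_apply' _ _ _
  refine ⟨fun n => (chain n).1, fun n => (chain n).2, ⟨fun n => (chain n).2.2, ?_, ?_⟩, rfl⟩
  · refine antitone_nat_of_succ_le fun n => ?_
    rw [hsucc]
    exact hsub _
  · intro n
    rw [hsucc]
    exact hdecode _

theorem CodesColorings.exists_injective [Nonempty α] {G : InitSeq α β → InitSeq α β}
    (hG : CodesColorings G) (hα : cof α ≠ ℵ₀) :
    ∃ φ : (α → β) → ℕ → InitSeq α β, φ.Injective := by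
  choose f C hchain hzero using hG.exists_isCodingChain hα
  choose a ha using fun f₀ => (IsClub.iInter_of_countable hα (hchain f₀).isClub).nonempty
  refine ⟨fun f₀ n => InitSeq.restrict (f f₀ n) (a f₀), fun f₀ f₁ heq => ?_⟩
  have hrestrict (n : ℕ) := InitSeq.restrict_eq_restrict_iff.1 (congrFun heq n)
  have hmem : a f₀ ∈ IsCodingChain.agreement (f f₀) (f f₁) (C f₀) (C f₁) := mem_iInter.2 fun n =>
    ⟨⟨mem_iInter.1 (ha f₀) n, (hrestrict n).1 ▸ mem_iInter.1 (ha f₁) n⟩, (hrestrict n).2⟩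
  rw [← hzero f₀, ← hzero f₁, (hchain f₀).eq_of_mem_agreement hα (hchain f₁) hmem]

end Counting

section Successor

variable {α β : Type u} [LinearOrder α] [WellFoundedLT α] [IsRegularCardinalOrder α]
  {κ : Cardinal.{u}}

theorem CodesColorings.mk_fun_le [Nonempty α] [NoMaxOrder α] (hκ : ℵ₀ ≤ κ) (hα : #α = succ κ)
    (hβ : #β = 2 ^ κ) {F : InitSeq α β → Fin 2} (hF : CodesColorings F) :
    #(α → β) ≤ 2 ^ κ := by
  have hκα : κ < cof α := by rw [cof_eq_cardinalMk, hα]; exact lt_succ κ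
  have hcof : cof α ≠ ℵ₀ := (hκ.trans_lt hκα).ne'
  obtain ⟨ι, hι⟩ : ∃ ι : Type u, #ι = κ := ⟨κ.out, mk_out κ⟩
  have hpow : (2 ^ κ) ^ κ = (2 : Cardinal.{u}) ^ κ := by rw [← power_mul, mul_eq_self hκ]
  have hseq : #(InitSeq α β) ≤ 2 ^ κ :=
    mk_initSeq_le hκ (hα.trans_le (succ_le_of_lt (cantor κ)))
      (fun a => lt_succ_iff.1 ((mk_Iio_lt a ord_cardinalMk).trans_eq hα)) hβ.le
  obtain ⟨e⟩ : Nonempty (β ≃ (ι → β)) := by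
    rw [← Cardinal.eq, ← power_def, hβ, hι, hpow]
  obtain ⟨G, hG⟩ := hF.exists_pi hcof (hι.trans_lt hκα) e.surjective
  have : Nonempty (InitSeq α β) :=
    let ⟨f, _⟩ := hF fun _ => 0
    ⟨InitSeq.restrict f (Classical.arbitrary α)⟩
  obtain ⟨c⟩ : Nonempty (InitSeq α β ↪ (ι → Fin 2)) := by
    rw [← le_def]
    simpa [hι] using hseq
  obtain ⟨φ, hφ⟩ :=
    (hG.comp_surjective (Function.invFun_surjective c.injective)).exists_injective hcof
  calc #(α → β) ≤ #(ℕ → InitSeq α β) := mk_le_of_injective hφ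
    _ = #(InitSeq α β) ^ ℵ₀ := by simp
    _ ≤ (2 ^ κ) ^ κ := (power_le_power_right hseq).trans
      (power_le_power_left (power_pos κ two_pos).ne' hκ)
    _ = 2 ^ κ := hpow

theorem exists_codesColorings_iff (hκ : ℵ₀ ≤ κ) (hα : #α = succ κ) (hβ : #β = 2 ^ κ) :
    (∃ F : InitSeq α β → Fin 2, CodesColorings F) ↔ (2 : Cardinal.{u}) ^ succ κ ≤ 2 ^ κ := by
  have hαcof : 1 < cof α := by
    rw [cof_eq_cardinalMk, hα]
    exact one_lt_aleph0.trans_le (hκ.trans (le_succ κ))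
  have : Nonempty α := cof_ne_zero_iff.1 (zero_lt_one.trans hαcof).ne'
  have : NoMaxOrder α := noTopOrder_iff_noMaxOrder α |>.1 (one_lt_cof_iff.1 hαcof)
  let _ : OrderBot α := WellFoundedLT.toOrderBot α
  constructor
  · rintro ⟨F, hF⟩
    calc (2 : Cardinal.{u}) ^ succ κ ≤ (2 ^ κ) ^ succ κ :=
          power_le_power_right (self_le_power 2 (one_le_aleph0.trans hκ))
      _ = #(α → β) := by rw [← power_def, hα, hβ]
      _ ≤ 2 ^ κ := hF.mk_fun_le hκ hα hβ
  · intro hle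
    obtain ⟨e⟩ : Nonempty ((α → Fin 2) ↪ β) := by
      rw [← le_def]
      simpa [hα, hβ] using hle
    exact exists_codesColorings_of_embedding e

end Successor

section Ordinal

variable {Λ : Ordinal.{u}}

theorem clubIn_image_val {C : Set (Iio Λ)} (hC : IsClub C) : ClubIn (Subtype.val '' C) Λ := by
  refine ⟨?_, fun a ha => ?_, fun S hS hne hbdd hlt => ?_⟩
  · rintro _ ⟨a, -, rfl⟩
    exact a.2
  · obtain ⟨b, hb, hab⟩ := hC.isCofinal ⟨a, ha⟩
    exact ⟨b, ⟨b, hb, rfl⟩, hab⟩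
  · have hpre (x) (hx : x ∈ S) : ∃ c ∈ C, c.1 = x := hS hx
    refine ⟨⟨sSup S, hlt⟩, hC.isLUB_mem (t := Subtype.val ⁻¹' S) ?_ ?_ ⟨?_, ?_⟩, rfl⟩
    · intro x hx
      obtain ⟨c, hc, hcx⟩ := hpre _ hx
      exact Subtype.ext hcx ▸ hc
    · obtain ⟨x, hx⟩ := hne
      obtain ⟨c, -, rfl⟩ := hpre x hx
      exact ⟨c, hx⟩
    · exact fun x hx => le_csSup hbdd hx
    · intro u hu
      refine csSup_le hne fun x hx => ?_
      obtain ⟨c, -, rfl⟩ := hpre x hx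
      exact hu hx

theorem isClub_preimage_val {C : Set Ordinal.{u}} (hC : ClubIn C Λ) :
    IsClub (Subtype.val ⁻¹' C : Set (Iio Λ)) := by
  refine ⟨fun d hd hne _ a ha => ?_, fun a => ?_⟩
  · have hsup : IsLUB (Subtype.val '' d) a.1 :=
      (PrincipalSeg.isNormal (Set.principalSegIio Λ)).map_isLUB ha hne
    have hmem := hC.2.2 (Subtype.val '' d) (image_subset_iff.2 hd) (hne.image _) ⟨a, hsup.1⟩
    rw [hsup.csSup_eq (hne.image _)] at hmem
    exact hmem a.2
  · obtain ⟨b, hb, hab⟩ := hC.2.1 a a.2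
    exact ⟨⟨b, hC.1 b hb⟩, hb, hab⟩

theorem statIn_image_val_iff {S : Set (Iio Λ)} :
    StatIn (Subtype.val '' S) Λ ↔ IsStationary S := by
  constructor
  · intro hS C hC
    obtain ⟨_, ⟨a, haS, rfl⟩, b, hb, hba⟩ := hS _ (clubIn_image_val hC)
    exact ⟨a, haS, Subtype.ext hba ▸ hb⟩
  · intro hS C hC
    obtain ⟨a, haS, haC⟩ := hS (isClub_preimage_val hC)
    exact ⟨a, ⟨a, haS, rfl⟩, haC⟩

end Ordinal

section Tower

variable (lam : Cardinal.{u})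

noncomputable instance : LinearOrder (Tower lam) :=
  inferInstanceAs (LinearOrder (Iio (succ lam).ord))

instance : WellFoundedLT (Tower lam) :=
  inferInstanceAs (WellFoundedLT (Iio (succ lam).ord))

theorem mk_tower : #(Tower lam) = lift.{u + 1} (succ lam) :=
  (mk_Iio_ordinal _).trans (by rw [card_ord])

theorem mk_target : #(Target lam) = lift.{u + 1} (2 ^ lam) :=
  (mk_Iio_ordinal _).trans (by rw [card_ord])

theorem isRegularCardinalOrder_tower (hinf : ℵ₀ ≤ lam) : IsRegularCardinalOrder (Tower lam) where
  type_lt_le_ord_cof := by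
    have htype : Ordinal.type (α := Tower lam) (· < ·) = Ordinal.lift.{u + 1} (succ lam).ord :=
      Ordinal.type_lt_Iio _
    have hcof : cof (Tower lam) = lift.{u + 1} (succ lam) :=
      (Ordinal.cof_Iio _).trans (by rw [← Ordinal.lift_cof, (isRegular_succ hinf).cof_ord])
    rw [htype, hcof, lift_ord]

/-- Unfolds the subtype of ordinals that indexes an element of `^{<λ⁺}(2^λ)` into an initial
segment of the order `Tower lam`. -/
def pSeqEquivInitSeq : PSeq lam ≃ InitSeq (Tower lam) (Target lam) where
  toFun s := ⟨s.1, fun b => s.2 ⟨b.1.1, b.2⟩⟩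
  invFun s := ⟨s.1, fun b => s.2 ⟨⟨b.1, b.2.trans s.1.2⟩, b.2⟩⟩
  left_inv _ := rfl
  right_inv _ := rfl

theorem weakDiamond_iff (k : ℕ) :
    WeakDiamond lam k (Iio (succ lam).ord) ↔
      ∀ F : InitSeq (Tower lam) (Target lam) → Fin k, ∃ g : Tower lam → Fin k,
        ∀ f, IsStationary {a | F (InitSeq.restrict f a) = g a} := by
  refine ((pSeqEquivInitSeq lam).arrowCongr (.refl _)).forall_congr fun F =>
    exists_congr fun g => forall_congr' fun f => ?_
  have himage : {a | ∃ ha : a < (succ lam).ord, a ∈ Iio (succ lam).ord ∧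
      F (restr lam f ⟨a, ha⟩) = g ⟨a, ha⟩} =
        Subtype.val '' {a : Tower lam | F (restr lam f a) = g a} := by
    ext a
    exact ⟨fun ⟨ha, _, h⟩ => ⟨⟨a, ha⟩, h, rfl⟩, fun ⟨b, h, hb⟩ => hb ▸ ⟨b.2, b.2, h⟩⟩
  rw [himage]
  exact statIn_image_val_iff

theorem not_weakDiamond_iff :
    ¬ WeakDiamond lam 2 (Iio (succ lam).ord) ↔
      ∃ F : InitSeq (Tower lam) (Target lam) → Fin 2, CodesColorings F := by
  simp only [weakDiamond_iff, codesColorings_iff_not_isStationary, not_forall, not_exists]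

end Tower

end WD

/-- **Devlin–Shelah.** For an infinite cardinal `λ`:
`2^λ < 2^{λ⁺}` iff the weak diamond `Φ²_{λ⁺}(λ⁺)` holds. -/
theorem stmt6 (lam : Cardinal.{u}) (hinf : ℵ₀ ≤ lam) :
    (2 : Cardinal.{u}) ^ lam < 2 ^ Order.succ lam ↔
      WD.WeakDiamond lam 2 (Set.Iio (Order.succ lam).ord) := by
  have := WD.isRegularCardinalOrder_tower lam hinf
  have hiff := WD.exists_codesColorings_iff (by simpa using hinf)
    ((WD.mk_tower lam).trans (lift_succ lam)) ((WD.mk_target lam).trans (lift_two_power lam))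
  rw [← not_iff_not, not_lt, WD.not_weakDiamond_iff, hiff, ← lift_succ, ← lift_two_power,
    ← lift_two_power, lift_le]
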